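/- For all integers n ≥ 3, 0 ≤ d ≤ n−1, and 2 ≤ j ≤ n−1, one has E(n,d,j) + E(n,d−1,j) = Σ_{l,k,u≥0} binom(j−2,u)·binom(n−j−1, n−l−3−u)·b(l,k)·b(n−l, d−l+k, u+2) + Σ_{l,k,u≥0} binom(j−2,u)·binom(n−j−1, l−3−u)·b(n−l, d−l+k)·b(l, k, u+2), where all sums have only finitely many nonzero terms and any count with a negative parameter is 0. -/

import Mathlib

/-- The word `π₁π₂⋯πₙ` of a permutation of `[n] = {1, …, n}`. -/
def permWord (n : ℕ) (π : Equiv.Perm (Fin n)) : ℕ → ℕ :=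
  fun i => if h : i < n then (π ⟨i, h⟩ : ℕ) + 1 else 0

/-- The number of descents of a permutation of `[n]`. -/
def desNum (n : ℕ) (π : Equiv.Perm (Fin n)) : ℕ :=
  ((Finset.range (n - 1)).filter (fun i => permWord n π (i + 1) < permWord n π i)).card

/-- Ballot permutation: every prefix has at least as many ascents as descents. -/
def IsBallot (n : ℕ) (π : Equiv.Perm (Fin n)) : Prop :=
  ∀ i ≤ n,
    ((Finset.range (i - 1)).filter (fun k => permWord n π (k + 1) < permWord n π k)).card ≤
      ((Finset.range (i - 1)).filter (fun k => permWord n π k < permWord n π (k + 1))).card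

/-- `π` has the three-letter word `a b c` as a factor. -/
def HasFactor (n : ℕ) (π : Equiv.Perm (Fin n)) (a b c : ℕ) : Prop :=
  ∃ k, k + 2 < n ∧ permWord n π k = a ∧ permWord n π (k + 1) = b ∧ permWord n π (k + 2) = c

/-- `b(n,d)`: the number of ballot permutations of `[n]` with `d` descents
(`0` for negative parameters). -/
noncomputable def ballotCount (n d : ℤ) : ℕ :=
  if 0 ≤ n ∧ 0 ≤ d then
    Nat.card {π : Equiv.Perm (Fin n.toNat) //
      IsBallot n.toNat π ∧ desNum n.toNat π = d.toNat}
  else 0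

/-- `b_{n,d}(i,j)`: the number of ballot permutations of length `n` with `d` descents
having `i n j` as a factor. -/
noncomputable def ballotFactorCount (n d i j : ℕ) : ℕ :=
  Nat.card {π : Equiv.Perm (Fin n) //
    IsBallot n π ∧ desNum n π = d ∧ HasFactor n π i n j}

/-- `b(n,d,j) := b_{n,d}(1,j) + b_{n,d}(j,1)` (`0` for negative parameters). -/
noncomputable def ballotFactorSum (n d j : ℤ) : ℕ :=
  if 0 ≤ n ∧ 0 ≤ d ∧ 0 ≤ j then
    ballotFactorCount n.toNat d.toNat 1 j.toNat + ballotFactorCount n.toNat d.toNat j.toNat 1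
  else 0

/-- `E(n,d,j)`: the number of permutations of `[n]` with `d` descents having
`1 n j` or `j n 1` as a factor (`0` for negative parameters). -/
noncomputable def Ecount (n d j : ℤ) : ℕ :=
  if 0 ≤ n ∧ 0 ≤ d ∧ 0 ≤ j then
    Nat.card {π : Equiv.Perm (Fin n.toNat) //
      desNum n.toNat π = d.toNat ∧
        (HasFactor n.toNat π 1 n.toNat j.toNat ∨ HasFactor n.toNat π j.toNat n.toNat 1)}
  else 0

/-- Binomial coefficient with integer lower index: `0` if the lower index is negative. -/
def zchoose (a b : ℤ) : ℤ :=
  if 0 ≤ b then (a.toNat.choose b.toNat : ℤ) else 0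

namespace BP

open Finset Classical

/-- Words on a finite set `S`: each letter used exactly once. -/
noncomputable def W (S : Finset ℕ) : Finset (List ℕ) := S.val.lists.toFinset

lemma mem_W {S : Finset ℕ} {L : List ℕ} : L ∈ W S ↔ L.Nodup ∧ ∀ x, x ∈ L ↔ x ∈ S := by
  unfold W
  rw [Multiset.mem_toFinset, Multiset.mem_lists_iff]
  constructor
  · intro h
    have h1 : S.val = (L : Multiset ℕ) := h
    refine ⟨?_, ?_⟩
    · have := S.nodup
      rw [h1] at this
      exact Multiset.coe_nodup.mp this
    · intro x
      rw [← Finset.mem_val, h1, Multiset.mem_coe]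
  · rintro ⟨h1, h2⟩
    refine (Multiset.Nodup.ext S.nodup (Multiset.coe_nodup.mpr h1)).mpr ?_
    intro x
    rw [Finset.mem_val, Multiset.mem_coe, h2]

lemma length_W {S : Finset ℕ} {L : List ℕ} (h : L ∈ W S) : L.length = #S := by
  rw [mem_W] at h
  have : L.toFinset = S := by ext x; simp [h.2]
  rw [← this, List.toFinset_card_of_nodup h.1]

/-- Words on `S` with property `P`. -/
noncomputable def WF (S : Finset ℕ) (P : List ℕ → Prop) : Finset (List ℕ) := (W S).filter P

lemma mem_WF {S : Finset ℕ} {P : List ℕ → Prop} {L : List ℕ} : L ∈ WF S P ↔ L ∈ W S ∧ P L := by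
  unfold WF
  exact mem_filter

/-- Number of words on `S` with property `P`. -/
noncomputable def cnt (S : Finset ℕ) (P : List ℕ → Prop) : ℕ := #(WF S P)

lemma cnt_eq_zero {S : Finset ℕ} {P : List ℕ → Prop} (h : ∀ L ∈ W S, ¬ P L) : cnt S P = 0 := by
  unfold cnt
  rw [card_eq_zero, eq_empty_iff_forall_notMem]
  intro L hL
  rw [mem_WF] at hL
  exact h L hL.1 hL.2

lemma cnt_congr {S : Finset ℕ} {P Q : List ℕ → Prop} (h : ∀ L ∈ W S, (P L ↔ Q L)) :
    cnt S P = cnt S Q := by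
  unfold cnt
  congr 1
  ext L
  rw [mem_WF, mem_WF]
  exact and_congr_right fun hL => h L hL

lemma cnt_or {S : Finset ℕ} {P Q : List ℕ → Prop} (h : ∀ L ∈ W S, P L → Q L → False) :
    cnt S (fun L => P L ∨ Q L) = cnt S P + cnt S Q := by
  unfold cnt
  rw [← card_union_of_disjoint]
  · congr 1
    ext L
    rw [mem_union, mem_WF, mem_WF, mem_WF]
    tauto
  · rw [disjoint_left]
    intro L h1 h2
    rw [mem_WF] at h1 h2
    exact h L h1.1 h1.2 h2.2

lemma card_bridge (m : ℕ) (e : Fin m → ℕ) (he : Function.Injective e) (T : Finset ℕ)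
    (hT : T = univ.image e) (P : List ℕ → Prop) :
    Nat.card {π : Equiv.Perm (Fin m) // P (List.ofFn (fun i => e (π i)))} =
      cnt T P := by
  unfold cnt WF
  rw [Nat.card_eq_fintype_card, Fintype.card_subtype]
  refine Finset.card_bij (fun π _ => List.ofFn (fun i => e (π i))) ?_ ?_ ?_
  · intro π hπ
    simp only [mem_filter, mem_univ, true_and] at hπ ⊢
    refine ⟨?_, hπ⟩
    rw [mem_W]
    refine ⟨List.nodup_ofFn.mpr (fun a b hab => π.injective (he hab)), ?_⟩
    intro x
    rw [hT, List.mem_ofFn]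
    simp only [mem_image, mem_univ, true_and]
    constructor
    · rintro ⟨a, ha⟩; exact ⟨_, ha⟩
    · rintro ⟨a, ha⟩; exact ⟨π.symm a, by simpa using ha⟩
  · intro π _ ρ _ h
    have := List.ofFn_injective h
    ext i
    have h2 := he (congrFun this i)
    rw [h2]
  · intro L hL
    simp only [mem_filter, mem_univ, true_and] at hL ⊢
    obtain ⟨hW, hP⟩ := hL
    have hlen : L.length = m := by
      rw [length_W hW, hT, card_image_of_injective _ he]; simp
    subst hlen
    rw [mem_W] at hW
    have h1 : ∀ i : Fin L.length, ∃ y, e y = L.get i := by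
      intro i
      have : L.get i ∈ T := (hW.2 _).mp (List.get_mem L i)
      rw [hT] at this
      simpa using this
    choose f hf using h1
    have hinj : Function.Injective f := by
      intro a b hab
      have : L.get a = L.get b := by rw [← hf, ← hf, hab]
      exact (List.nodup_iff_injective_get.mp hW.1) this
    have hL : List.ofFn (fun i => e (f i)) = L := by
      have : (fun i => e (f i)) = L.get := funext hf
      rw [this, List.ofFn_get]
    refine ⟨Equiv.ofBijective f (Finite.injective_iff_bijective.mp hinj), ?_, ?_⟩
    · simp only [Equiv.ofBijective_apply, hL, hP]
    · simp only [Equiv.ofBijective_apply, hL]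

/-- Descents of a word. -/
noncomputable def des (L : List ℕ) : ℕ :=
  #((range (L.length - 1)).filter (fun i => L.getD (i + 1) 0 < L.getD i 0))

/-- Sign of a step. -/
def sg (a b : ℕ) : ℤ := if b < a then -1 else if a < b then 1 else 0

/-- Height function of a word. -/
def H (L : List ℕ) (i : ℕ) : ℤ := ∑ k ∈ range i, sg (L.getD k 0) (L.getD (k + 1) 0)

/-- Ballot words. -/
def Bal (L : List ℕ) : Prop := ∀ i < L.length, 0 ≤ H L i

/-- Factors by index. -/
def Fac (a b c : ℕ) (L : List ℕ) : Prop :=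
  ∃ k, k + 2 < L.length ∧ L.getD k 0 = a ∧ L.getD (k + 1) 0 = b ∧ L.getD (k + 2) 0 = c

lemma H_eq (w : ℕ → ℕ) (i : ℕ) : ∑ k ∈ range i, sg (w k) (w (k + 1)) =
    (#((range i).filter (fun k => w k < w (k + 1))) : ℤ) -
      #((range i).filter (fun k => w (k + 1) < w k)) := by
  simp only [card_filter, Nat.cast_sum]
  rw [← sum_sub_distrib]
  refine sum_congr rfl fun k _ => ?_
  unfold sg
  split_ifs <;> omega

lemma ofFn_getD {m : ℕ} (e : Fin m → ℕ) (π : Equiv.Perm (Fin m)) (i : ℕ) (hi : i < m) :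
    (List.ofFn (fun i => e (π i))).getD i 0 = e (π ⟨i, hi⟩) := by
  rw [List.getD_eq_getElem _ _ (by simpa using hi)]
  simp

lemma pw {m : ℕ} (π : Equiv.Perm (Fin m)) (i : ℕ) (hi : i < m) :
    permWord m π i = π ⟨i, hi⟩ + 1 := by simp [permWord, hi]

lemma lt_iff_pw {m : ℕ} (e : Fin m → ℕ) (he : StrictMono e) (π : Equiv.Perm (Fin m)) (i k : ℕ)
    (hi : i < m) (hk : k < m) :
    (List.ofFn (fun i => e (π i))).getD i 0 < (List.ofFn (fun i => e (π i))).getD k 0 ↔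
      permWord m π i < permWord m π k := by
  rw [ofFn_getD e π i hi, ofFn_getD e π k hk, pw π i hi, pw π k hk, he.lt_iff_lt]
  rw [Fin.lt_def]; omega

lemma des_ofFn {m : ℕ} (e : Fin m → ℕ) (he : StrictMono e) (π : Equiv.Perm (Fin m)) :
    des (List.ofFn (fun i => e (π i))) = desNum m π := by
  unfold des desNum
  rw [List.length_ofFn]
  congr 1
  refine filter_congr fun i hi => ?_
  rw [mem_range] at hi
  exact lt_iff_pw e he π _ _ (by omega) (by omega)

lemma bal_ofFn {m : ℕ} (e : Fin m → ℕ) (he : StrictMono e) (π : Equiv.Perm (Fin m)) :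
    Bal (List.ofFn (fun i => e (π i))) ↔ IsBallot m π := by
  have key : ∀ i < m, (0 ≤ H (List.ofFn (fun i => e (π i))) i ↔
    #((range i).filter (fun k => permWord m π (k + 1) < permWord m π k)) ≤
      #((range i).filter (fun k => permWord m π k < permWord m π (k + 1)))) := by
    intro i hi
    unfold H
    rw [H_eq (fun k => (List.ofFn (fun i => e (π i))).getD k 0)]
    rw [sub_nonneg, Nat.cast_le]
    have h1 : (range i).filter (fun k => (List.ofFn (fun i => e (π i))).getD (k+1) 0 <
        (List.ofFn (fun i => e (π i))).getD k 0) =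
        (range i).filter (fun k => permWord m π (k + 1) < permWord m π k) := by
      refine filter_congr fun k hk => ?_
      rw [mem_range] at hk
      exact lt_iff_pw e he π _ _ (by omega) (by omega)
    have h2 : (range i).filter (fun k => (List.ofFn (fun i => e (π i))).getD k 0 <
        (List.ofFn (fun i => e (π i))).getD (k+1) 0) =
        (range i).filter (fun k => permWord m π k < permWord m π (k + 1)) := by
      refine filter_congr fun k hk => ?_
      rw [mem_range] at hk
      exact lt_iff_pw e he π _ _ (by omega) (by omega)
    rw [h1, h2]
  unfold Bal IsBallot
  rw [List.length_ofFn]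
  constructor
  · intro h i hi
    rcases Nat.eq_zero_or_pos i with h0 | h0
    · subst h0; simp
    · exact (key (i - 1) (by omega)).mp (h _ (by omega))
  · intro h i hi
    have := h (i + 1) (by omega)
    rw [Nat.add_sub_cancel] at this
    exact (key i hi).mpr this

lemma fac_ofFn {m : ℕ} (e : Fin m → ℕ) (π : Equiv.Perm (Fin m)) (a b c a' b' c' : ℕ)
    (ha : ∀ i : Fin m, e i = a ↔ (i : ℕ) + 1 = a') (hb : ∀ i : Fin m, e i = b ↔ (i : ℕ) + 1 = b')
    (hc : ∀ i : Fin m, e i = c ↔ (i : ℕ) + 1 = c') :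
    Fac a b c (List.ofFn (fun i => e (π i))) ↔ HasFactor m π a' b' c' := by
  unfold Fac HasFactor
  rw [List.length_ofFn]
  refine exists_congr fun k => and_congr_right fun hk => ?_
  rw [ofFn_getD e π k (by omega), ofFn_getD e π (k+1) (by omega), ofFn_getD e π (k+2) hk,
    pw π k (by omega), pw π (k+1) (by omega), pw π (k+2) hk, ha, hb, hc]

lemma fac_excl {S : Finset ℕ} {L : List ℕ} (hL : L ∈ W S) {n j : ℕ} (hj : j ≠ 1)
    (h1 : Fac 1 n j L) (h2 : Fac j n 1 L) : False := by
  rw [mem_W] at hL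
  obtain ⟨k, hk, a1, a2, a3⟩ := h1
  obtain ⟨k', hk', b1, b2, b3⟩ := h2
  rw [List.getD_eq_getElem _ _ (by omega)] at a1 a2 a3 b1 b2 b3
  have : k + 1 = k' + 1 := (List.Nodup.getElem_inj_iff hL.1).mp (a2.trans b2.symm)
  have : k = k' := by omega
  subst this
  omega

/-- Either factor. -/
def Fac2 (n j : ℕ) (L : List ℕ) : Prop := Fac 1 n j L ∨ Fac j n 1 L

lemma card_or {S : Finset ℕ} {n j : ℕ} (hj : j ≠ 1) (P : List ℕ → Prop) :
    cnt S (fun L => P L ∧ Fac2 n j L) =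
    cnt S (fun L => P L ∧ Fac 1 n j L) + cnt S (fun L => P L ∧ Fac j n 1 L) := by
  rw [← cnt_or]
  · refine cnt_congr fun L _ => ?_
    unfold Fac2
    tauto
  · intro L hL h1 h2
    exact fac_excl hL hj h1.2 h2.2

lemma Ecount_eq (n d j : ℕ) : Ecount n d j =
    cnt (Icc 1 n) (fun L => des L = d ∧ Fac2 n j L) := by
  unfold Ecount
  rw [if_pos (by omega)]
  simp only [Int.toNat_natCast]
  have he : StrictMono (fun i : Fin n => (i : ℕ) + 1) := by
    intro a b h
    simpa using h
  rw [← card_bridge n (fun i => (i : ℕ) + 1) he.injective (Icc 1 n)]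
  · refine Nat.card_congr (Equiv.subtypeEquivRight fun π => ?_)
    rw [des_ofFn (fun i => (i : ℕ) + 1) he π, Fac2,
      fac_ofFn (fun i => (i : ℕ) + 1) π 1 n j 1 n j (by simp) (by simp) (by simp),
      fac_ofFn (fun i => (i : ℕ) + 1) π j n 1 j n 1 (by simp) (by simp) (by simp)]
  · ext x
    simp only [mem_Icc, mem_image, mem_univ, true_and]
    constructor
    · intro h; exact ⟨⟨x - 1, by omega⟩, by simp; omega⟩
    · rintro ⟨a, rfl⟩; have := a.2; omega

lemma ballotCount_eq (S : Finset ℕ) (l : ℕ) (hS : #S = l) (k : ℤ) : ballotCount l k =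
    cnt S (fun L => Bal L ∧ (des L : ℤ) = k) := by
  unfold ballotCount
  split_ifs with h
  · have he := (S.orderEmbOfFin hS).strictMono
    rw [Int.toNat_natCast, ← card_bridge l _ he.injective S]
    · refine Nat.card_congr (Equiv.subtypeEquivRight fun π => ?_)
      rw [des_ofFn _ he π, bal_ofFn _ he π]
      refine and_congr_right fun _ => ?_
      omega
    · apply Finset.coe_injective
      simp
  · symm
    apply cnt_eq_zero
    rintro L _ ⟨_, h2⟩
    omega

lemma rank_iff (S : Finset ℕ) (m : ℕ) (hS : #S = m) (x : ℕ) (hx : x ∈ S) (i : Fin m) :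
    S.orderEmbOfFin hS i = x ↔ (i : ℕ) + 1 = #(S.filter (· < x)) + 1 := by
  have key : ∀ i : Fin m, #(S.filter (· < S.orderEmbOfFin hS i)) = i := by
    intro i
    have : S.filter (· < S.orderEmbOfFin hS i) = (Iio i).image (S.orderEmbOfFin hS) := by
      ext y
      simp only [mem_filter, mem_image, mem_Iio]
      constructor
      · rintro ⟨h1, h2⟩
        have : y ∈ Set.range (S.orderEmbOfFin hS) := by rw [range_orderEmbOfFin]; exact h1
        obtain ⟨a, rfl⟩ := this
        exact ⟨a, by simpa using h2, rfl⟩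
      · rintro ⟨a, h, rfl⟩
        exact ⟨orderEmbOfFin_mem _ _ _, by simpa using h⟩
    rw [this, card_image_of_injective _ (S.orderEmbOfFin hS).injective]
    simp
  have : x ∈ Set.range (S.orderEmbOfFin hS) := by rw [range_orderEmbOfFin]; exact hx
  obtain ⟨a, rfl⟩ := this
  rw [key, (S.orderEmbOfFin hS).injective.eq_iff, Fin.ext_iff]
  omega

lemma ballotFactorSum_eq (n j : ℕ) (hj1 : 2 ≤ j) (hj2 : j < n) (S : Finset ℕ) (m : ℕ)
    (hS : #S = m) (hSn : S ⊆ Icc 1 n) (h1 : 1 ∈ S) (hj : j ∈ S) (hn : n ∈ S) (k : ℤ) :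
    ballotFactorSum m k ((#(S ∩ Ioo 1 j) : ℕ) + 2) =
    cnt S (fun L => (Bal L ∧ (des L : ℤ) = k) ∧ Fac2 n j L) := by
  have r1 : #(S.filter (· < 1)) = 0 := by
    rw [card_eq_zero, filter_eq_empty_iff]
    intro x hx
    have := hSn hx
    rw [mem_Icc] at this
    omega
  have rn : #(S.filter (· < n)) + 1 = m := by
    have : S = insert n (S.filter (· < n)) := by
      ext x
      simp only [mem_insert, mem_filter]
      constructor
      · intro hx
        have := mem_Icc.mp (hSn hx)
        by_cases h : x = n
        · exact Or.inl h
        · exact Or.inr ⟨hx, by omega⟩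
      · rintro (rfl | h)
        · exact hn
        · exact h.1
    rw [← hS]
    conv_rhs => rw [this]
    rw [card_insert_of_notMem (by simp)]
  have rj : #(S.filter (· < j)) = #(S ∩ Ioo 1 j) + 1 := by
    have : S.filter (· < j) = insert 1 (S ∩ Ioo 1 j) := by
      ext x
      simp only [mem_insert, mem_filter, mem_inter, mem_Ioo]
      constructor
      · rintro ⟨hx, h⟩
        have := mem_Icc.mp (hSn hx)
        by_cases h' : x = 1
        · exact Or.inl h'
        · exact Or.inr ⟨hx, by omega⟩
      · rintro (rfl | h)
        · exact ⟨h1, by omega⟩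
        · exact ⟨h.1, h.2.2⟩
    rw [this, card_insert_of_notMem (by simp)]
  have he := (S.orderEmbOfFin hS).strictMono
  unfold ballotFactorSum
  split_ifs with h
  · rw [card_or (show j ≠ 1 by omega)]
    have e1 := rank_iff S m hS 1 h1
    have ej := rank_iff S m hS j hj
    have en := rank_iff S m hS n hn
    rw [r1] at e1
    rw [rn] at en
    rw [rj] at ej
    have hu : ((#(S ∩ Ioo 1 j) : ℕ) + 2 : ℤ).toNat = #(S ∩ Ioo 1 j) + 1 + 1 := by omega
    rw [Int.toNat_natCast, hu]
    have himg : S = univ.image (S.orderEmbOfFin hS) := by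
      apply Finset.coe_injective
      simp
    unfold ballotFactorCount
    rw [← card_bridge m _ he.injective S himg, ← card_bridge m _ he.injective S himg]
    congr 1
    · refine Nat.card_congr (Equiv.subtypeEquivRight fun π => ?_)
      rw [des_ofFn _ he π, bal_ofFn _ he π, fac_ofFn _ π _ _ _ _ _ _ e1 en ej, and_assoc]
      refine and_congr_right fun _ => and_congr_left fun _ => ?_
      omega
    · refine Nat.card_congr (Equiv.subtypeEquivRight fun π => ?_)
      rw [des_ofFn _ he π, bal_ofFn _ he π, fac_ofFn _ π _ _ _ _ _ _ ej en e1, and_assoc]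
      refine and_congr_right fun _ => and_congr_left fun _ => ?_
      omega
  · symm
    apply cnt_eq_zero
    rintro L _ ⟨⟨_, h2⟩, _⟩
    omega

lemma getD_drop' (L : List ℕ) (p i : ℕ) : (L.drop p).getD i 0 = L.getD (p + i) 0 := by
  simp [List.getD]

lemma getD_rev (L : List ℕ) (p i : ℕ) (hp : p ≤ L.length) (hi : i < p) :
    (L.take p).reverse.getD i 0 = L.getD (p - 1 - i) 0 := by
  rw [List.getD_eq_getElem _ _ (by simp; omega), List.getD_eq_getElem _ _ (by omega)]
  rw [List.getElem_reverse, List.getElem_take]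
  congr 1
  simp
  omega

lemma H_zero (L : List ℕ) : H L 0 = 0 := by simp [H]

lemma H_succ (L : List ℕ) (i : ℕ) :
    H L (i + 1) = H L i + sg (L.getD i 0) (L.getD (i + 1) 0) := by
  unfold H
  rw [sum_range_succ]

lemma H_drop (L : List ℕ) (p i : ℕ) : H (L.drop p) i = H L (p + i) - H L p := by
  induction i with
  | zero => simp [H_zero]
  | succ i ih =>
    rw [H_succ, ih, getD_drop', getD_drop', ← add_assoc, H_succ L (p + i)]
    ring

lemma sg_swap (a b : ℕ) : sg a b = - sg b a := by
  unfold sg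
  split_ifs <;> omega

lemma H_rev (L : List ℕ) (p i : ℕ) (hp : p ≤ L.length) (hi : i < p) :
    H (L.take p).reverse i = H L (p - 1 - i) - H L (p - 1) := by
  induction i with
  | zero => simp [H_zero]
  | succ i ih =>
    rw [H_succ, ih (by omega), getD_rev L p i hp (by omega), getD_rev L p (i + 1) hp hi]
    have h1 : p - 1 - i = (p - 1 - (i + 1)) + 1 := by omega
    rw [h1, H_succ L (p - 1 - (i + 1)), sg_swap]
    ring

lemma getD_ne {L : List ℕ} (hL : L.Nodup) {i k : ℕ} (hi : i < L.length) (hk : k < L.length)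
    (h : i ≠ k) : L.getD i 0 ≠ L.getD k 0 := by
  rw [List.getD_eq_getElem _ _ hi, List.getD_eq_getElem _ _ hk]
  intro h2
  exact h ((List.Nodup.getElem_inj_iff hL).mp h2)

lemma H_step {L : List ℕ} (hL : L.Nodup) {i : ℕ} (hi : i + 1 < L.length) :
    H L (i + 1) = H L i + 1 ∨ H L (i + 1) = H L i - 1 := by
  rw [H_succ]
  have := getD_ne hL (i := i) (k := i + 1) (by omega) hi (by omega)
  unfold sg
  split_ifs <;> omega

lemma two_des {L : List ℕ} (hL : L.Nodup) (h : 0 < L.length) :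
    2 * (des L : ℤ) = L.length - 1 - H L (L.length - 1) := by
  unfold des H
  rw [H_eq (fun k => L.getD k 0)]
  have h1 : (range (L.length - 1)).filter (fun k => L.getD k 0 < L.getD (k + 1) 0) =
      (range (L.length - 1)).filter (fun k => ¬ L.getD (k + 1) 0 < L.getD k 0) := by
    refine filter_congr fun k hk => ?_
    rw [mem_range] at hk
    have := getD_ne hL (i := k) (k := k + 1) (by omega) (by omega) (by omega)
    omega
  have h2 := card_filter_add_card_filter_not (s := range (L.length - 1))
    (fun k => L.getD (k + 1) 0 < L.getD k 0)
  rw [h1]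
  rw [card_range] at h2
  omega

/-- Cutting `L` at `p` gives two ballot words. -/
def Valid (L : List ℕ) (p : ℕ) : Prop := Bal (L.take p).reverse ∧ Bal (L.drop p)

lemma valid_iff (L : List ℕ) (p : ℕ) (hp : p ≤ L.length) : Valid L p ↔
    (∀ i < p, H L (p - 1) ≤ H L i) ∧ (∀ i, p ≤ i → i < L.length → H L p ≤ H L i) := by
  unfold Valid Bal
  refine and_congr ?_ ?_
  · rw [List.length_reverse, List.length_take, min_eq_left hp]
    constructor
    · intro h i hi
      have := h (p - 1 - i) (by omega)
      rw [H_rev L p _ hp (by omega)] at this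
      have e : p - 1 - (p - 1 - i) = i := by omega
      rw [e] at this
      omega
    · intro h i hi
      rw [H_rev L p _ hp hi]
      have := h (p - 1 - i) (by omega)
      omega
  · rw [List.length_drop]
    constructor
    · intro h i hi hi2
      have := h (i - p) (by omega)
      rw [H_drop] at this
      have e : p + (i - p) = i := by omega
      rw [e] at this
      omega
    · intro h i hi
      rw [H_drop]
      have := h (p + i) (by omega) (by omega)
      omega

lemma exists_cuts (h : ℕ → ℤ) (n : ℕ) (hn : 0 < n)
    (hs : ∀ i, i + 1 < n → h (i + 1) = h i + 1 ∨ h (i + 1) = h i - 1) :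
    ∃ p q, p < q ∧ q ≤ n ∧
      (∀ r ≤ n, ((∀ i < r, h (r - 1) ≤ h i) ∧ (∀ i, r ≤ i → i < n → h r ≤ h i)) ↔
        (r = p ∨ r = q)) ∧
      (p = 0 ∨ h p = h (p - 1) - 1) ∧ (q = n ∨ h q = h (q - 1) + 1) := by
  obtain ⟨m, hm, hmin⟩ := exists_min_image (range n) h ⟨0, by simpa using hn⟩
  have hne : ((range n).filter (fun i => h i = h m)).Nonempty := ⟨m, by simpa using hm⟩
  obtain ⟨p, hp, hp2⟩ := exists_min_image _ (fun i => i) hne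
  obtain ⟨q, hq, hq2⟩ := exists_max_image _ (fun i => i) hne
  simp only [mem_filter, mem_range] at *
  have hpm : ∀ i < p, h p < h i := by
    intro i hi
    have h1 := hmin i (by omega)
    by_contra hc
    have := hp2 i ⟨by omega, by omega⟩
    omega
  have hqm : ∀ i, q < i → i < n → h q < h i := by
    intro i hi hin
    have h1 := hmin i (by omega)
    by_contra hc
    have := hq2 i ⟨by omega, by omega⟩
    omega
  have hpq := hp2 q hq
  refine ⟨p, q + 1, by omega, by omega, ?_, ?_, ?_⟩
  · intro r hr
    constructor
    · rintro ⟨a, b⟩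
      by_cases r0 : r = 0
      · left
        by_contra hc
        have := hpm 0 (by omega)
        have := b p (by omega) (by omega)
        subst r0
        omega
      by_cases rn : r = n
      · right
        by_contra hc
        have := hqm (r - 1) (by omega) (by omega)
        have := a q (by omega)
        omega
      have hst := hs (r - 1) (by omega)
      have e : r - 1 + 1 = r := by omega
      rw [e] at hst
      rcases hst with hst | hst
      · right
        by_contra hc
        by_cases hlt : q < r - 1
        · have := hqm (r - 1) hlt (by omega)
          have := a q (by omega)
          omega
        · have := b q (by omega) (by omega)
          have := hmin (r - 1) (by omega)
          omega
      · left
        by_contra hc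
        by_cases hlt : r < p
        · have := hpm r hlt
          have := b p (by omega) (by omega)
          omega
        · have := a p (by omega)
          have := hmin r (by omega)
          omega
    · rintro (rfl | rfl)
      · refine ⟨?_, ?_⟩
        · intro i hi
          have h1 := hpm i hi
          have h2 := hpm (r - 1) (by omega)
          have hst := hs (r - 1) (by omega)
          have e : r - 1 + 1 = r := by omega
          rw [e] at hst
          omega
        · intro i _ hi
          have := hmin i hi
          omega
      · refine ⟨?_, ?_⟩
        · intro i hi
          have := hmin i (by omega)
          simp only [Nat.add_sub_cancel]
          omega
        · intro i hi hin
          have h1 := hqm i (by omega) hin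
          have h2 := hqm (q + 1) (by omega) (by omega)
          have hst := hs q (by omega)
          omega
  · by_cases p0 : p = 0
    · exact Or.inl p0
    · right
      have h2 := hpm (p - 1) (by omega)
      have hst := hs (p - 1) (by omega)
      have e : p - 1 + 1 = p := by omega
      rw [e] at hst
      omega
  · by_cases p0 : q + 1 = n
    · exact Or.inl p0
    · right
      have h2 := hqm (q + 1) (by omega) (by omega)
      have hst := hs q (by omega)
      simp only [Nat.add_sub_cancel]
      omega

/-- Descent condition at a cut. -/
def Cd (d : ℕ) (l : ℕ) (A B : List ℕ) : Prop := (des B : ℤ) = (d : ℤ) - l + des A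

lemma two_des_drop {L : List ℕ} (hL : L.Nodup) (p : ℕ) (hp : p < L.length) :
    2 * (des (L.drop p) : ℤ) = L.length - p - 1 - (H L (L.length - 1) - H L p) := by
  rw [two_des (hL.sublist (List.drop_sublist _ _)) (by rw [List.length_drop]; omega), H_drop,
    List.length_drop]
  have e : p + (L.length - p - 1) = L.length - 1 := by omega
  rw [e]
  omega

lemma two_des_rev {L : List ℕ} (hL : L.Nodup) (p : ℕ) (hp : p ≤ L.length) (h0 : 0 < p) :
    2 * (des (L.take p).reverse : ℤ) = p - 1 + H L (p - 1) := by
  have hlen : (L.take p).reverse.length = p := by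
    rw [List.length_reverse, List.length_take, min_eq_left hp]
  rw [two_des (List.nodup_reverse.mpr (hL.sublist (List.take_sublist _ _))) (by omega), hlen,
    H_rev L p _ hp (by omega), Nat.sub_self, H_zero]
  omega

lemma cut_count (L : List ℕ) (hL : L.Nodup) (h0 : 0 < L.length) (d : ℕ) :
    ∑ p ∈ range (L.length + 1),
      (if Valid L p ∧ Cd d p (L.take p).reverse (L.drop p) then 1 else 0) =
      (if des L = d then 1 else 0) + (if des L + 1 = d then 1 else 0) := by
  obtain ⟨p, q, hpq, hqn, hV, hp, hq⟩ := exists_cuts (H L) L.length h0 (fun i hi => H_step hL hi)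
  have hsub : ({p, q} : Finset ℕ) ⊆ range (L.length + 1) := by
    intro x
    simp only [mem_insert, mem_singleton, mem_range]
    omega
  rw [← sum_subset hsub]
  · rw [sum_pair (by omega)]
    have vp : Valid L p := by
      rw [valid_iff L p (by omega), hV p (by omega)]; exact Or.inl rfl
    have vq : Valid L q := by
      rw [valid_iff L q (by omega), hV q (by omega)]; exact Or.inr rfl
    have hdL := two_des hL h0
    have cp : Cd d p (L.take p).reverse (L.drop p) ↔ des L = d := by
      unfold Cd
      have h1 := two_des_drop hL p (by omega)
      by_cases p0 : p = 0
      · subst p0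
        simp [des]
      · have h2 := two_des_rev hL p (by omega) (by omega)
        omega
    have cq : Cd d q (L.take q).reverse (L.drop q) ↔ des L + 1 = d := by
      unfold Cd
      have h2 := two_des_rev hL q (by omega) (by omega)
      by_cases p0 : q = L.length
      · have : des (L.drop q) = 0 := by
          rw [p0]; simp [des]
        rw [← p0] at hdL
        omega
      · have h1 := two_des_drop hL q (by omega)
        omega
    simp only [vp, vq, cp, cq, true_and]
  · intro r hr hr2
    rw [if_neg]
    rintro ⟨h1, -⟩
    rw [mem_range] at hr
    rw [valid_iff L r (by omega), hV r (by omega)] at h1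
    simp only [mem_insert, mem_singleton] at hr2
    exact hr2 h1

lemma cnt_sum (S : Finset ℕ) (P : List ℕ → Prop) : cnt S P = ∑ L ∈ W S, if P L then 1 else 0 := by
  unfold cnt WF
  rw [card_filter]

lemma E_sum (n d : ℕ) (hn : 0 < n) (F : List ℕ → Prop) :
    cnt (Icc 1 n) (fun L => des L = d ∧ F L) + cnt (Icc 1 n) (fun L => des L + 1 = d ∧ F L) =
    ∑ l ∈ range (n + 1), cnt (Icc 1 n)
      (fun L => (Valid L l ∧ Cd d l (L.take l).reverse (L.drop l)) ∧ F L) := by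
  simp only [cnt_sum]
  rw [sum_comm, ← sum_add_distrib]
  refine sum_congr rfl fun L hL => ?_
  have hlen : L.length = n := by rw [length_W hL]; simp
  by_cases hF : F L
  · simp only [hF, and_true]
    rw [← cut_count L (mem_W.mp hL).1 (by omega) d, hlen]
  · simp [hF]

lemma fac_unbroken {n j l : ℕ} (L : List ℕ) (hL : L ∈ W (Icc 1 n)) (hj1 : 2 ≤ j) (hj2 : j < n)
    (hl : l ≤ n) (hV : Valid L l) :
    Fac2 n j L ↔ (Fac2 n j (L.drop l) ∨ Fac2 n j (L.take l).reverse) := by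
  have hlen : L.length = n := by rw [length_W hL]; simp
  rw [valid_iff L l (by omega)] at hV
  have key : ∀ a b, a < n → b < n → Fac a n b L → (Fac a n b (L.drop l) ∨
      Fac b n a (L.take l).reverse) := by
    rintro a b ha hb ⟨k, hk, h1, h2, h3⟩
    have s1 := H_succ L k
    have s2 : H L (k + 2) = H L (k + 1) + sg (L.getD (k + 1) 0) (L.getD (k + 2) 0) :=
      H_succ L (k + 1)
    rw [h1, h2] at s1
    rw [h2, h3] at s2
    unfold sg at s1 s2
    rw [if_neg (by omega), if_pos (by omega)] at s1
    rw [if_pos (by omega)] at s2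
    by_cases c1 : l ≤ k
    · left
      refine ⟨k - l, by rw [List.length_drop]; omega, ?_⟩
      simp only [getD_drop']
      rw [show l + (k - l) = k by omega, show l + (k - l + 1) = k + 1 by omega,
        show l + (k - l + 2) = k + 2 by omega]
      exact ⟨h1, h2, h3⟩
    by_cases c2 : k + 3 ≤ l
    · right
      refine ⟨l - 3 - k, by simp; omega, ?_⟩
      rw [getD_rev _ _ _ (by omega) (by omega), getD_rev _ _ _ (by omega) (by omega),
        getD_rev _ _ _ (by omega) (by omega)]
      rw [show l - 1 - (l - 3 - k) = k + 2 by omega, show l - 1 - (l - 3 - k + 1) = k + 1 by omega,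
        show l - 1 - (l - 3 - k + 2) = k by omega]
      exact ⟨h3, h2, h1⟩
    exfalso
    by_cases c3 : l = k + 1
    · have := hV.2 (k + 2) (by omega) (by omega)
      rw [c3] at this
      omega
    · have hl2 : l = k + 2 := by omega
      have := hV.1 k (by omega)
      rw [hl2, show k + 2 - 1 = k + 1 by omega] at this
      omega
  have key2 : ∀ a b, Fac a n b (L.drop l) → Fac a n b L := by
    rintro a b ⟨k, hk, h⟩
    simp only [getD_drop'] at h
    rw [List.length_drop] at hk
    exact ⟨l + k, by omega, h⟩
  have key3 : ∀ a b, Fac a n b (L.take l).reverse → Fac b n a L := by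
    rintro a b ⟨k, hk, h1, h2, h3⟩
    rw [List.length_reverse, List.length_take, min_eq_left (by omega)] at hk
    rw [getD_rev _ _ _ (by omega) (by omega)] at h1 h2 h3
    refine ⟨l - 1 - (k + 2), by omega, h3, ?_, ?_⟩
    · rw [show l - 1 - (k + 2) + 1 = l - 1 - (k + 1) by omega]; exact h2
    · rw [show l - 1 - (k + 2) + 2 = l - 1 - k by omega]; exact h1
  unfold Fac2
  constructor
  · rintro (h | h)
    · rcases key _ _ (by omega) (by omega) h with h | h <;> tauto
    · rcases key _ _ (by omega) (by omega) h with h | h <;> tauto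
  · rintro ((h | h) | (h | h))
    · exact Or.inl (key2 _ _ h)
    · exact Or.inr (key2 _ _ h)
    · exact Or.inr (key3 _ _ h)
    · exact Or.inl (key3 _ _ h)

lemma fac2_mem {n j : ℕ} {L : List ℕ} (h : Fac2 n j L) : 1 ∈ L ∧ n ∈ L ∧ j ∈ L := by
  have key : ∀ a b, Fac a n b L → a ∈ L ∧ n ∈ L ∧ b ∈ L := by
    rintro a b ⟨k, hk, h1, h2, h3⟩
    rw [List.getD_eq_getElem _ _ (by omega)] at h1 h2 h3
    exact ⟨h1 ▸ List.getElem_mem _, h2 ▸ List.getElem_mem _, h3 ▸ List.getElem_mem _⟩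
  rcases h with h | h
  · exact key _ _ h
  · have := key _ _ h; tauto

lemma fac_disj {n j l : ℕ} (L : List ℕ) (hL : L ∈ W (Icc 1 n))
    (h1 : Fac2 n j (L.drop l)) (h2 : Fac2 n j (L.take l).reverse) : False := by
  have a := (fac2_mem h1).2.1
  have b := List.mem_reverse.mp (fac2_mem h2).2.1
  have hN := (mem_W.mp hL).1
  rw [← List.take_append_drop l L] at hN
  exact (List.disjoint_of_nodup_append hN) b a

/-- Pairs of words with a property. -/
noncomputable def pairs (S T : Finset ℕ) (R : List ℕ → List ℕ → Prop) :
    Finset (List ℕ × List ℕ) := (W S ×ˢ W T).filter (fun x => R x.1 x.2)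

lemma mem_pairs {S T : Finset ℕ} {R : List ℕ → List ℕ → Prop} {x : List ℕ × List ℕ} :
    x ∈ pairs S T R ↔ x.1 ∈ W S ∧ x.2 ∈ W T ∧ R x.1 x.2 := by
  unfold pairs
  rw [mem_filter, mem_product, and_assoc]

lemma cut_bij (U : Finset ℕ) (l : ℕ) (hl : l ≤ #U) (R : List ℕ → List ℕ → Prop) :
    cnt U (fun L => R (L.take l).reverse (L.drop l)) =
      ∑ S ∈ powersetCard l U, #(pairs S (U \ S) R) := by
  rw [← card_sigma]
  unfold cnt
  refine card_bij' (fun L _ => ⟨(L.take l).toFinset, ((L.take l).reverse, L.drop l)⟩)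
    (fun x _ => x.2.1.reverse ++ x.2.2) ?_ ?_ ?_ ?_
  · intro L hL
    rw [mem_WF] at hL
    obtain ⟨hW, hR⟩ := hL
    have hlen := length_W hW
    rw [mem_W] at hW
    have hN := hW.1
    rw [← List.take_append_drop l L] at hN
    have hdisj := List.disjoint_of_nodup_append hN
    rw [mem_sigma, mem_powersetCard, mem_pairs]
    refine ⟨⟨?_, ?_⟩, ?_, ?_, hR⟩
    · intro x hx
      rw [List.mem_toFinset] at hx
      exact (hW.2 x).mp (List.mem_of_mem_take hx)
    · rw [List.toFinset_card_of_nodup (hW.1.sublist (List.take_sublist _ _)), List.length_take]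
      omega
    · rw [mem_W]
      refine ⟨List.nodup_reverse.mpr (hW.1.sublist (List.take_sublist _ _)), ?_⟩
      intro x
      simp
    · rw [mem_W]
      refine ⟨hW.1.sublist (List.drop_sublist _ _), ?_⟩
      intro x
      simp only [mem_sdiff, List.mem_toFinset]
      constructor
      · intro hx
        exact ⟨(hW.2 x).mp (List.mem_of_mem_drop hx), fun h => hdisj h hx⟩
      · rintro ⟨h1, h2⟩
        have h3 := (hW.2 x).mpr h1
        rw [← List.take_append_drop l L, List.mem_append] at h3
        tauto
  · rintro ⟨S, A, B⟩ h
    rw [mem_sigma, mem_powersetCard, mem_pairs] at h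
    obtain ⟨⟨hS, hc⟩, hA, hB, hR⟩ := h
    simp only at hS hc hA hB hR ⊢
    have hlA : A.reverse.length = l := by rw [List.length_reverse, length_W hA, hc]
    rw [mem_W] at hA hB
    rw [mem_WF, List.take_left' hlA, List.drop_left' hlA, List.reverse_reverse]
    refine ⟨?_, hR⟩
    rw [mem_W]
    constructor
    · rw [List.nodup_append']
      refine ⟨List.nodup_reverse.mpr hA.1, hB.1, ?_⟩
      intro x h1 h2
      rw [List.mem_reverse, hA.2] at h1
      rw [hB.2, mem_sdiff] at h2
      exact h2.2 h1
    · intro x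
      rw [List.mem_append, List.mem_reverse, hA.2, hB.2, mem_sdiff]
      constructor
      · rintro (h | h)
        · exact hS h
        · exact h.1
      · intro h
        by_cases h2 : x ∈ S
        · exact Or.inl h2
        · exact Or.inr ⟨h, h2⟩
  · intro L hL
    simp
  · rintro ⟨S, A, B⟩ h
    rw [mem_sigma, mem_powersetCard, mem_pairs] at h
    obtain ⟨⟨hS, hc⟩, hA, hB, hR⟩ := h
    simp only at hS hc hA hB hR ⊢
    have hlA : A.reverse.length = l := by rw [List.length_reverse, length_W hA, hc]
    rw [List.take_left' hlA, List.drop_left' hlA, List.reverse_reverse]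
    have : A.reverse.toFinset = S := by
      ext x
      rw [List.mem_toFinset, List.mem_reverse, (mem_W.mp hA).2]
    rw [this]

lemma pairs_card (S T : Finset ℕ) (n d l : ℕ) (hS : #S ≤ n) (P Q : List ℕ → Prop) :
    #(pairs S T (fun A B => (P A ∧ Q B) ∧ Cd d l A B)) =
      ∑ k ∈ range (n + 1), cnt S (fun A => P A ∧ (des A : ℤ) = (k : ℤ)) *
        cnt T (fun B => Q B ∧ (des B : ℤ) = (d : ℤ) - l + (k : ℤ)) := by
  have e : ∀ k ∈ range (n + 1), cnt S (fun A => P A ∧ (des A : ℤ) = (k : ℤ)) *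
        cnt T (fun B => Q B ∧ (des B : ℤ) = (d : ℤ) - l + (k : ℤ)) =
      ∑ x ∈ W S ×ˢ W T, (if (P x.1 ∧ (des x.1 : ℤ) = (k : ℤ)) then 1 else 0) *
        (if (Q x.2 ∧ (des x.2 : ℤ) = (d : ℤ) - l + (k : ℤ)) then 1 else 0) := by
    intro k _
    rw [cnt_sum, cnt_sum, sum_mul_sum, sum_product]
    refine sum_congr rfl fun _ _ => sum_congr rfl fun _ _ => ?_
    congr
  rw [sum_congr rfl e, sum_comm]
  unfold pairs
  rw [card_filter]
  refine sum_congr rfl fun x hx => ?_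
  rw [mem_product] at hx
  have hdes : des x.1 ≤ n := by
    have h1 : des x.1 ≤ #(range (x.1.length - 1)) := card_filter_le _ _
    rw [card_range, length_W hx.1] at h1
    omega
  rw [sum_eq_single (des x.1)]
  · unfold Cd
    by_cases h1 : P x.1 <;> by_cases h2 : Q x.2 <;> simp [h1, h2]
  · intro k _ hk
    rw [if_neg, zero_mul]
    rintro ⟨_, h⟩
    exact hk (by exact_mod_cast h.symm)
  · intro h
    rw [mem_range] at h
    omega

lemma card_three {n j : ℕ} (hj1 : 2 ≤ j) (hj2 : j < n) {A B : Finset ℕ} (hA : A ⊆ Ioo 1 j)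
    (hB : B ⊆ Ioo j n) : #(({1, j, n} : Finset ℕ) ∪ (A ∪ B)) = 3 + (#A + #B) := by
  rw [card_union_of_disjoint, card_union_of_disjoint]
  · congr 1
    rw [card_insert_of_notMem, card_pair (by omega)]
    simp only [mem_insert, mem_singleton]
    omega
  · rw [disjoint_left]
    intro x h1 h2
    have h1 := mem_Ioo.mp (hA h1)
    have h2 := mem_Ioo.mp (hB h2)
    omega
  · rw [disjoint_left]
    intro x h1 h2
    simp only [mem_insert, mem_singleton] at h1
    rw [mem_union] at h2
    rcases h2 with h2 | h2
    · have h2 := mem_Ioo.mp (hA h2)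
      omega
    · have h2 := mem_Ioo.mp (hB h2)
      omega

lemma three_decomp {n j : ℕ} {T : Finset ℕ} (hT : T ⊆ Icc 1 n)
    (h : 1 ∈ T ∧ j ∈ T ∧ n ∈ T) :
    ({1, j, n} : Finset ℕ) ∪ ((T ∩ Ioo 1 j) ∪ (T ∩ Ioo j n)) = T := by
  ext x
  simp only [mem_union, mem_insert, mem_singleton, mem_inter, mem_Ioo]
  constructor
  · rintro ((rfl | rfl | rfl) | (h | h)) <;> tauto
  · intro hx
    have := mem_Icc.mp (hT hx)
    simp only [hx, true_and]
    omega

lemma sub_count (n j m u : ℕ) (hj1 : 2 ≤ j) (hj2 : j < n) :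
    (#((powersetCard m (Icc 1 n)).filter
      (fun T => (1 ∈ T ∧ j ∈ T ∧ n ∈ T) ∧ #(T ∩ Ioo 1 j) = u)) : ℤ) =
      ((j - 2).choose u : ℤ) * zchoose ((n : ℤ) - j - 1) ((m : ℤ) - 3 - u) := by
  unfold zchoose
  split_ifs with h
  · have e1 : ((n : ℤ) - j - 1).toNat = n - j - 1 := by omega
    have e2 : ((m : ℤ) - 3 - u).toNat = m - 3 - u := by omega
    rw [e1, e2, ← Nat.cast_mul, Nat.cast_inj]
    have c1 : #(Ioo 1 j) = j - 2 := by rw [Nat.card_Ioo]; omega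
    have c2 : #(Ioo j n) = n - j - 1 := by rw [Nat.card_Ioo]
    rw [← c1, ← c2, ← card_powersetCard, ← card_powersetCard, ← card_product]
    refine card_bij' (fun T _ => (T ∩ Ioo 1 j, T ∩ Ioo j n))
      (fun x _ => ({1, j, n} : Finset ℕ) ∪ (x.1 ∪ x.2)) ?_ ?_ ?_ ?_
    · intro T hT
      rw [mem_filter, mem_powersetCard] at hT
      obtain ⟨⟨hT1, hT2⟩, hT3, hT4⟩ := hT
      have hc := card_three hj1 hj2 (inter_subset_right (s₁ := T) (s₂ := Ioo 1 j))
        (inter_subset_right (s₁ := T) (s₂ := Ioo j n))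
      rw [three_decomp hT1 hT3] at hc
      rw [mem_product, mem_powersetCard, mem_powersetCard]
      exact ⟨⟨inter_subset_right, hT4⟩, inter_subset_right, by simp only; omega⟩
    · rintro ⟨A, B⟩ hx
      rw [mem_product, mem_powersetCard, mem_powersetCard] at hx
      obtain ⟨⟨hA, cA⟩, hB, cB⟩ := hx
      simp only at hA cA hB cB ⊢
      have hc := card_three hj1 hj2 hA hB
      rw [mem_filter, mem_powersetCard]
      refine ⟨⟨?_, by omega⟩, ⟨by simp, by simp, by simp⟩, ?_⟩
      · intro x hx
        rw [mem_Icc]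
        simp only [mem_union, mem_insert, mem_singleton] at hx
        rcases hx with hx | hx | hx
        · omega
        · have := mem_Ioo.mp (hA hx); omega
        · have := mem_Ioo.mp (hB hx); omega
      · rw [← cA]
        congr 1
        ext x
        have h1 := @hA x
        have h2 := @hB x
        simp only [mem_union, mem_insert, mem_singleton, mem_inter, mem_Ioo] at h1 h2 ⊢
        by_cases a : x ∈ A
        · have := h1 a; simp only [a, iff_true]; tauto
        · by_cases b : x ∈ B
          · have := h2 b; simp only [a, b, iff_false, or_false, false_or, or_true, true_and]; omega
          · simp only [a, b, iff_false, or_false, false_or, or_true, true_and]; omega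
    · intro T hT
      rw [mem_filter, mem_powersetCard] at hT
      exact three_decomp hT.1.1 hT.2.1
    · rintro ⟨A, B⟩ hx
      rw [mem_product, mem_powersetCard, mem_powersetCard] at hx
      obtain ⟨⟨hA, cA⟩, hB, cB⟩ := hx
      simp only at hA cA hB cB ⊢
      ext x
      all_goals
        have h1 := @hA x
        have h2 := @hB x
        simp only [mem_union, mem_insert, mem_singleton, mem_inter, mem_Ioo] at h1 h2 ⊢
        by_cases a : x ∈ A <;> by_cases b : x ∈ B <;> simp only [a, b, true_imp_iff, iff_true,
          iff_false, or_true, true_or, true_and, or_false, false_or, false_imp_iff] at h1 h2 ⊢ <;> omega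
  · rw [mul_zero, Nat.cast_eq_zero, card_eq_zero, filter_eq_empty_iff]
    rintro T hT ⟨h3, h4⟩
    rw [mem_powersetCard] at hT
    have hc := card_three hj1 hj2 (inter_subset_right (s₁ := T) (s₂ := Ioo 1 j))
        (inter_subset_right (s₁ := T) (s₂ := Ioo j n))
    rw [three_decomp hT.1 h3] at hc
    omega

lemma sub_sum (n j m : ℕ) (hj1 : 2 ≤ j) (hj2 : j < n) (g : ℕ → ℤ) :
    ∑ T ∈ powersetCard m (Icc 1 n), (if 1 ∈ T ∧ j ∈ T ∧ n ∈ T then g (#(T ∩ Ioo 1 j)) else 0) =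
    ∑ u ∈ range (n + 1), ((j - 2).choose u : ℤ) * zchoose ((n : ℤ) - j - 1) ((m : ℤ) - 3 - u) *
      g u := by
  have e : ∀ u ∈ range (n + 1),
      ((j - 2).choose u : ℤ) * zchoose ((n : ℤ) - j - 1) ((m : ℤ) - 3 - u) * g u =
      ∑ T ∈ powersetCard m (Icc 1 n),
        (if (1 ∈ T ∧ j ∈ T ∧ n ∈ T) ∧ #(T ∩ Ioo 1 j) = u then g u else 0) := by
    intro u _
    rw [← sub_count n j m u hj1 hj2, ← sum_filter, sum_const, nsmul_eq_mul]
  rw [sum_congr rfl e, sum_comm]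
  refine sum_congr rfl fun T hT => ?_
  by_cases h : 1 ∈ T ∧ j ∈ T ∧ n ∈ T
  · simp only [h, and_self, true_and, if_true]
    rw [sum_ite_eq, if_pos]
    rw [mem_range]
    have : #(T ∩ Ioo 1 j) ≤ #(Ioo 1 j) := card_le_card inter_subset_right
    rw [Nat.card_Ioo] at this
    omega
  · simp [h]

lemma G_eq (n j : ℕ) (hj1 : 2 ≤ j) (hj2 : j < n) (T : Finset ℕ) (m : ℕ)
    (hT : T ∈ powersetCard m (Icc 1 n)) (e : ℤ) :
    (cnt T (fun B => (Bal B ∧ Fac2 n j B) ∧ (des B : ℤ) = e) : ℤ) =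
      if 1 ∈ T ∧ j ∈ T ∧ n ∈ T then (ballotFactorSum m e ((#(T ∩ Ioo 1 j) : ℕ) + 2) : ℤ) else 0 := by
  rw [mem_powersetCard] at hT
  split_ifs with h
  · rw [ballotFactorSum_eq n j hj1 hj2 T m hT.2 hT.1 h.1 h.2.1 h.2.2]
    congr 1
    refine cnt_congr fun L _ => ?_
    tauto
  · rw [Nat.cast_eq_zero]
    refine cnt_eq_zero ?_
    rintro L hL ⟨⟨_, h2⟩, _⟩
    have := fac2_mem h2
    simp only [(mem_W.mp hL).2] at this
    tauto

lemma sum_compl (n l : ℕ) (hl : l ≤ n) (f : Finset ℕ → ℤ) :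
    ∑ S ∈ powersetCard l (Icc 1 n), f (Icc 1 n \ S) =
      ∑ T ∈ powersetCard (n - l) (Icc 1 n), f T := by
  have hc : #(Icc 1 n) = n := by simp
  refine sum_bij' (fun S _ => Icc 1 n \ S) (fun T _ => Icc 1 n \ T) ?_ ?_ ?_ ?_ ?_
  · intro S hS
    rw [mem_powersetCard] at hS ⊢
    refine ⟨sdiff_subset, ?_⟩
    rw [card_sdiff_of_subset hS.1]
    omega
  · intro S hS
    rw [mem_powersetCard] at hS ⊢
    refine ⟨sdiff_subset, ?_⟩
    rw [card_sdiff_of_subset hS.1]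
    omega
  · intro S hS
    rw [mem_powersetCard] at hS
    exact Finset.sdiff_sdiff_eq_self hS.1
  · intro S hS
    rw [mem_powersetCard] at hS
    exact Finset.sdiff_sdiff_eq_self hS.1
  · intro S hS
    rfl

lemma first_part (n d j l : ℕ) (hj1 : 2 ≤ j) (hj2 : j < n) (hl : l ≤ n) :
    (cnt (Icc 1 n) (fun L => (Bal (L.take l).reverse ∧ Bal (L.drop l) ∧ Fac2 n j (L.drop l)) ∧
      Cd d l (L.take l).reverse (L.drop l)) : ℤ) =
    ∑ k ∈ range (n + 1), ∑ u ∈ range (n + 1),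
        ((j - 2).choose u : ℤ) * zchoose ((n : ℤ) - j - 1) ((n : ℤ) - l - 3 - u) *
          (ballotCount (l : ℤ) (k : ℤ) : ℤ) *
          (ballotFactorSum ((n : ℤ) - l) ((d : ℤ) - l + k) ((u : ℤ) + 2) : ℤ) := by
  have hc : #(Icc 1 n) = n := by simp
  rw [cut_bij (Icc 1 n) l (by omega) (fun A B => (Bal A ∧ Bal B ∧ Fac2 n j B) ∧ Cd d l A B)]
  have e : ∀ S ∈ powersetCard l (Icc 1 n),
      #(pairs S (Icc 1 n \ S) (fun A B => (Bal A ∧ Bal B ∧ Fac2 n j B) ∧ Cd d l A B)) =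
      ∑ k ∈ range (n + 1), ballotCount (l : ℤ) (k : ℤ) *
        cnt (Icc 1 n \ S) (fun B => (Bal B ∧ Fac2 n j B) ∧ (des B : ℤ) = (d : ℤ) - l + k) := by
    intro S hS
    rw [mem_powersetCard] at hS
    rw [pairs_card S _ n d l (by omega) Bal (fun B => Bal B ∧ Fac2 n j B)]
    refine sum_congr rfl fun k _ => ?_
    rw [ballotCount_eq S l hS.2]
  rw [sum_congr rfl e, sum_comm]
  push_cast
  refine sum_congr rfl fun k _ => ?_
  rw [← mul_sum, sum_compl n l hl (fun T => (cnt T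
    (fun B => (Bal B ∧ Fac2 n j B) ∧ (des B : ℤ) = (d : ℤ) - l + k) : ℤ)),
    sum_congr rfl (fun T hT => G_eq n j hj1 hj2 T (n - l) hT _),
    sub_sum n j (n - l) hj1 hj2
      (fun u => (ballotFactorSum ((n - l : ℕ) : ℤ) ((d : ℤ) - l + k) ((u : ℤ) + 2) : ℤ)), mul_sum]
  refine sum_congr rfl fun u _ => ?_
  rw [Nat.cast_sub hl]
  ring

lemma second_part (n d j l : ℕ) (hj1 : 2 ≤ j) (hj2 : j < n) (hl : l ≤ n) :
    (cnt (Icc 1 n) (fun L => ((Bal (L.take l).reverse ∧ Fac2 n j (L.take l).reverse) ∧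
      Bal (L.drop l)) ∧ Cd d l (L.take l).reverse (L.drop l)) : ℤ) =
    ∑ k ∈ range (n + 1), ∑ u ∈ range (n + 1),
        ((j - 2).choose u : ℤ) * zchoose ((n : ℤ) - j - 1) ((l : ℤ) - 3 - u) *
          (ballotCount ((n : ℤ) - l) ((d : ℤ) - l + k) : ℤ) *
          (ballotFactorSum (l : ℤ) (k : ℤ) ((u : ℤ) + 2) : ℤ) := by
  have hc : #(Icc 1 n) = n := by simp
  rw [cut_bij (Icc 1 n) l (by omega) (fun A B => ((Bal A ∧ Fac2 n j A) ∧ Bal B) ∧ Cd d l A B)]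
  have e : ∀ S ∈ powersetCard l (Icc 1 n),
      #(pairs S (Icc 1 n \ S) (fun A B => ((Bal A ∧ Fac2 n j A) ∧ Bal B) ∧ Cd d l A B)) =
      ∑ k ∈ range (n + 1),
        cnt S (fun B => (Bal B ∧ Fac2 n j B) ∧ (des B : ℤ) = (k : ℤ)) *
        ballotCount ((n : ℤ) - l) ((d : ℤ) - l + k) := by
    intro S hS
    rw [mem_powersetCard] at hS
    rw [pairs_card S _ n d l (by omega) (fun B => Bal B ∧ Fac2 n j B) Bal]
    refine sum_congr rfl fun k _ => ?_
    rw [← Nat.cast_sub hl, ballotCount_eq (Icc 1 n \ S) (n - l)]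
    rw [card_sdiff_of_subset hS.1]
    omega
  rw [sum_congr rfl e, sum_comm]
  push_cast
  refine sum_congr rfl fun k _ => ?_
  rw [← sum_mul, sum_congr rfl (fun T hT => G_eq n j hj1 hj2 T l hT _),
    sub_sum n j l hj1 hj2
      (fun u => (ballotFactorSum (l : ℤ) (k : ℤ) ((u : ℤ) + 2) : ℤ)), sum_mul]
  refine sum_congr rfl fun u _ => ?_
  ring

lemma split_cnt (n d j l : ℕ) (hj1 : 2 ≤ j) (hj2 : j < n) (hl : l ≤ n) :
    cnt (Icc 1 n) (fun L => (Valid L l ∧ Cd d l (L.take l).reverse (L.drop l)) ∧ Fac2 n j L) =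
    cnt (Icc 1 n) (fun L => (Bal (L.take l).reverse ∧ Bal (L.drop l) ∧ Fac2 n j (L.drop l)) ∧
      Cd d l (L.take l).reverse (L.drop l)) +
    cnt (Icc 1 n) (fun L => ((Bal (L.take l).reverse ∧ Fac2 n j (L.take l).reverse) ∧
      Bal (L.drop l)) ∧ Cd d l (L.take l).reverse (L.drop l)) := by
  rw [← cnt_or]
  · refine cnt_congr fun L hL => ?_
    by_cases hV : Valid L l
    · rw [fac_unbroken L hL hj1 hj2 hl hV]
      unfold Valid at hV ⊢
      tauto
    · unfold Valid at hV ⊢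
      tauto
  · intro L hL h1 h2
    exact fac_disj L hL h1.1.2.2 h2.1.1.2

end BP

/-- `E(n,d,j) + E(n,d-1,j)` as a double convolution of ballot counts; the sums over
`l, k, u ≥ 0` have only finitely many nonzero terms, all with `l, k, u ≤ n`. -/
theorem Ecount_add_rec (n d j : ℕ) (hn : 3 ≤ n) (hd : d ≤ n - 1) (hj1 : 2 ≤ j)
    (hj2 : j ≤ n - 1) :
    (Ecount n d j : ℤ) + (Ecount n ((d : ℤ) - 1) j : ℤ) =
      (∑ l ∈ Finset.range (n + 1), ∑ k ∈ Finset.range (n + 1), ∑ u ∈ Finset.range (n + 1),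
        ((j - 2).choose u : ℤ) * zchoose ((n : ℤ) - j - 1) ((n : ℤ) - l - 3 - u) *
          (ballotCount (l : ℤ) (k : ℤ) : ℤ) *
          (ballotFactorSum ((n : ℤ) - l) ((d : ℤ) - l + k) ((u : ℤ) + 2) : ℤ)) +
      ∑ l ∈ Finset.range (n + 1), ∑ k ∈ Finset.range (n + 1), ∑ u ∈ Finset.range (n + 1),
        ((j - 2).choose u : ℤ) * zchoose ((n : ℤ) - j - 1) ((l : ℤ) - 3 - u) *
          (ballotCount ((n : ℤ) - l) ((d : ℤ) - l + k) : ℤ) *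
          (ballotFactorSum (l : ℤ) (k : ℤ) ((u : ℤ) + 2) : ℤ) := by
  have hj3 : j < n := by omega
  have hE : ((Ecount n d j : ℤ) + (Ecount n ((d : ℤ) - 1) j : ℤ)) =
      ((BP.cnt (Finset.Icc 1 n) (fun L => BP.des L = d ∧ BP.Fac2 n j L) +
        BP.cnt (Finset.Icc 1 n) (fun L => BP.des L + 1 = d ∧ BP.Fac2 n j L) : ℕ) : ℤ) := by
    rw [BP.Ecount_eq, Nat.cast_add]
    congr 2
    rcases Nat.eq_zero_or_pos d with h0 | h0
    · subst h0
      rw [BP.cnt_eq_zero (fun L _ h => by omega)]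
      unfold Ecount
      rw [if_neg (by omega)]
    · have e : ((d : ℤ) - 1) = ((d - 1 : ℕ) : ℤ) := by omega
      rw [e, BP.Ecount_eq]
      refine BP.cnt_congr fun L _ => and_congr_left fun _ => ?_
      omega
  rw [hE, BP.E_sum n d (by omega) (BP.Fac2 n j), ← Finset.sum_add_distrib, Nat.cast_sum]
  refine Finset.sum_congr rfl fun l hl => ?_
  rw [Finset.mem_range] at hl
  rw [BP.split_cnt n d j l hj1 hj3 (by omega), Nat.cast_add,
    BP.first_part n d j l hj1 hj3 (by omega), BP.second_part n d j l hj1 hj3 (by omega)]
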